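/- There exists a commutative Noetherian local ring (R, 𝔪) that is weakly quasi-complete but not quasi-complete. -/

import Mathlib

/-!
Let `A = ℤ_(5)` and `R = A[X, Y]/(X², Y²)`, encoded as `A[ε][ε]`, a finite free `A`-module with
basis `1, X, Y, XY`. Its completion is `ℤ₅[ε][ε]`.

*`R` is weakly quasi-complete.* If `Iₙ` is decreasing and no `Iₙ` lies in `𝔪^k`, pick
`fₙ ∈ Iₙ \ 𝔪^k`. By compactness of `ℤ₅` a subsequence converges to some `t ≠ 0` in `ℤ₅[ε][ε]`.
Every nonzero element of `ℤ₅[ε][ε]` has a multiple of the form `5^m XY`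
(`exists_mul_eq_pow_eps_eps`). Approximating the multiplier by elements of `R` exhibits
`5^m XY ∈ R` as a `5`-adic limit of elements of each `Iₙ`, hence it lies in each `Iₙ` because
ideals of `R` are closed by Krull's theorem (`mem_of_forall_sub_mem_pow`). So `⋂ Iₙ ≠ 0`; see
`isWeaklyQuasiComplete_of_essential`.

*`R` is not quasi-complete.* Let `b ∈ ℤ₅` be irrational (a square root of `-1`), and let `Iₙ` be
the ideal of all `x X + y Y + w XY` with `y ≡ b x mod 5^n`. Irrationality of `b` gives
`⋂ Iₙ = (XY)`, but `Iₙ` contains an element `X + a Y`, which is not in `(XY) + 𝔪²`;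
see `not_isQuasiComplete`.
-/

/-- A (Noetherian) local ring `R` with maximal ideal `𝔪` is *quasi-complete* if for
every decreasing sequence `(Iₙ)` of ideals of `R` and every natural number `k` there
exists `s` such that `I_s ⊆ (⋂ₙ Iₙ) + 𝔪^k`. -/
def IsQuasiComplete (R : Type) [CommRing R] [IsLocalRing R] : Prop :=
  ∀ I : ℕ → Ideal R, (∀ n : ℕ, I (n + 1) ≤ I n) →
    ∀ k : ℕ, ∃ s : ℕ, I s ≤ (⨅ n : ℕ, I n) + (IsLocalRing.maximalIdeal R) ^ k

/-- A (Noetherian) local ring `R` with maximal ideal `𝔪` is *weakly quasi-complete*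
if for every decreasing sequence `(Iₙ)` of ideals of `R` with `⋂ₙ Iₙ = (0)` and every
natural number `k` there exists `s` such that `I_s ⊆ 𝔪^k`. -/
def IsWeaklyQuasiComplete (R : Type) [CommRing R] [IsLocalRing R] : Prop :=
  ∀ I : ℕ → Ideal R, (∀ n : ℕ, I (n + 1) ≤ I n) → (⨅ n : ℕ, I n) = ⊥ →
    ∀ k : ℕ, ∃ s : ℕ, I s ≤ (⨅ n : ℕ, I n) + (IsLocalRing.maximalIdeal R) ^ k

open DualNumber TrivSqZeroExt

namespace QuasiCompleteExample

/-! ### Dual numbers and the `p`-adic topology -/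

section DualMap

variable {A B : Type} [CommRing A] [CommRing B]

/-- The ring homomorphism `A[ε] → B[ε]` induced by `φ : A → B` on both coordinates. -/
def dmap (φ : A →+* B) : A[ε] →+* B[ε] where
  toFun x := inl (φ x.fst) + inr (φ x.snd)
  map_one' := by ext <;> simp
  map_zero' := by ext <;> simp
  map_add' x y := by ext <;> simp
  map_mul' x y := by ext <;> simp

@[simp] lemma fst_dmap (φ : A →+* B) (x : A[ε]) : (dmap φ x).fst = φ x.fst := by
  simp [dmap]
@[simp] lemma snd_dmap (φ : A →+* B) (x : A[ε]) : (dmap φ x).snd = φ x.snd := by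
  simp [dmap]

lemma natCast_pow_dvd_iff (p k : ℕ) (x : A[ε]) :
    (p : A[ε]) ^ k ∣ x ↔ (p : A) ^ k ∣ x.fst ∧ (p : A) ^ k ∣ x.snd := by
  have h : (p : A[ε]) ^ k = inl ((p : A) ^ k) := by
    rw [← inl_natCast, inl_pow]
  rw [h]
  constructor
  · rintro ⟨y, rfl⟩
    exact ⟨⟨y.fst, by simp⟩, ⟨y.snd, by simp⟩⟩
  · rintro ⟨⟨u, hu⟩, ⟨v, hv⟩⟩
    exact ⟨inl u + inr v, by ext <;> simp [hu, hv]⟩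

/-- The `p`-adic topology of `A` is induced from that of `B` along `φ`. -/
def ReflectsDvd (p : ℕ) (φ : A →+* B) : Prop :=
  ∀ k a, (p : B) ^ k ∣ φ a → (p : A) ^ k ∣ a

/-- The image of `φ` is `p`-adically dense in `B`. -/
def DenseImage (p : ℕ) (φ : A →+* B) : Prop :=
  ∀ (k : ℕ) (z : B), ∃ a, (p : B) ^ k ∣ φ a - z

/-- Sequential compactness of `B` in the `p`-adic topology. -/
def SeqCompactAdic (p : ℕ) (B : Type) [CommRing B] : Prop :=
  ∀ s : ℕ → B, ∃ t : B, ∃ σ : ℕ → ℕ, StrictMono σ ∧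
    ∀ l : ℕ, ∃ N, ∀ n ≥ N, (p : B) ^ l ∣ s (σ n) - t

lemma ReflectsDvd.dmap {p : ℕ} {φ : A →+* B} (h : ReflectsDvd p φ) :
    ReflectsDvd p (dmap φ) := by
  intro k a ha
  rw [natCast_pow_dvd_iff, fst_dmap, snd_dmap] at ha
  rw [natCast_pow_dvd_iff]
  exact ⟨h _ _ ha.1, h _ _ ha.2⟩

lemma DenseImage.dmap {p : ℕ} {φ : A →+* B} (h : DenseImage p φ) :
    DenseImage p (dmap φ) := by
  intro k z
  obtain ⟨a, ha⟩ := h k z.fst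
  obtain ⟨c, hc⟩ := h k z.snd
  exact ⟨inl a + inr c, (natCast_pow_dvd_iff _ _ _).2 ⟨by simpa using ha, by simpa using hc⟩⟩

lemma SeqCompactAdic.dualNumber {p : ℕ} (h : SeqCompactAdic p B) : SeqCompactAdic p B[ε] := by
  intro s
  obtain ⟨t, σ, hσ, ht⟩ := h fun n => (s n).fst
  obtain ⟨u, τ, hτ, hu⟩ := h fun n => (s (σ n)).snd
  refine ⟨inl t + inr u, σ ∘ τ, hσ.comp hτ, fun l => ?_⟩
  obtain ⟨N, hN⟩ := ht l
  obtain ⟨M, hM⟩ := hu l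
  refine ⟨max N M, fun n hn => (natCast_pow_dvd_iff _ _ _).2 ⟨?_, ?_⟩⟩
  · simpa using hN (τ n) ((le_of_max_le_left hn).trans (hτ.id_le n))
  · simpa using hM n (le_of_max_le_right hn)

instance [IsNoetherianRing A] : IsNoetherianRing A[ε] := by
  have : IsNoetherian A A[ε] := inferInstanceAs (IsNoetherian A (A × A))
  exact isNoetherian_of_tower A this

instance [IsLocalRing A] : IsLocalRing A[ε] :=
  have : IsLocalHom (fstHom A A A : A[ε] →ₐ[A] A).toRingHom :=
    ⟨fun _ h => isUnit_iff_isUnit_fst.2 h⟩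
  RingHom.domain_isLocalRing (fstHom A A A : A[ε] →ₐ[A] A).toRingHom

lemma mem_maximalIdeal_iff [IsLocalRing A] (x : A[ε]) :
    x ∈ IsLocalRing.maximalIdeal A[ε] ↔ x.fst ∈ IsLocalRing.maximalIdeal A := by
  simp [IsLocalRing.mem_maximalIdeal, mem_nonunits_iff, isUnit_iff_isUnit_fst]

end DualMap

/-- Ideals of a Noetherian local ring are closed in the `𝔪`-adic topology. -/
lemma mem_of_forall_sub_mem_pow {R : Type} [CommRing R] [IsNoetherianRing R] [IsLocalRing R]
    (I : Ideal R) (x : R) (h : ∀ l, ∃ i ∈ I, i - x ∈ IsLocalRing.maximalIdeal R ^ l) : x ∈ I := by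
  have H : IsHausdorff (IsLocalRing.maximalIdeal R) (R ⧸ I) :=
    IsHausdorff.of_isLocalRing _ _ (Ideal.IsPrime.ne_top inferInstance)
  rw [← Ideal.Quotient.eq_zero_iff_mem]
  refine H.haus' _ fun l => ?_
  obtain ⟨i, hi, hx⟩ := h l
  rw [SModEq.zero]
  have : Ideal.Quotient.mk I x = (x - i) • (1 : R ⧸ I) := by
    rw [Algebra.smul_def, mul_one, Ideal.Quotient.algebraMap_eq, map_sub,
      Ideal.Quotient.eq_zero_iff_mem.2 hi, sub_zero]
  rw [this]
  refine Submodule.smul_mem_smul ?_ trivial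
  rw [← neg_sub]
  exact neg_mem hx

/-! ### Weak quasi-completeness via essential dense subrings -/

/-- If `R` is `p`-adically dense in the compact ring `S`, with the induced topology, and every
nonzero ideal of `S` contains the image of a nonzero element of `R`, then `R` is weakly
quasi-complete. -/
lemma isWeaklyQuasiComplete_of_essential {R S : Type} [CommRing R] [CommRing S]
    [IsNoetherianRing R] [IsLocalRing R] {p : ℕ} (Φ : R →+* S) (hΦ : ReflectsDvd p Φ)
    (hd : DenseImage p Φ) (hc : SeqCompactAdic p S)
    (hpm : (p : R) ∈ IsLocalRing.maximalIdeal R)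
    (hess : ∀ t : S, t ≠ 0 → ∃ g r, r ≠ 0 ∧ g * t = Φ r) : IsWeaklyQuasiComplete R := by
  intro I hI hbot k
  by_contra! hcon
  have hanti : Antitone I := antitone_nat_of_succ_le hI
  have hpow {l : ℕ} {x : R} (h : (p : R) ^ l ∣ x) : x ∈ IsLocalRing.maximalIdeal R ^ l :=
    Ideal.mem_of_dvd _ h (Ideal.pow_mem_pow hpm l)
  have hex : ∀ s, ∃ f ∈ I s, f ∉ IsLocalRing.maximalIdeal R ^ k := fun s => by
    obtain ⟨f, hf, hfk⟩ := SetLike.not_le_iff_exists.1 (hcon s)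
    exact ⟨f, hf, fun h => hfk (Ideal.mem_sup_right h)⟩
  choose f hfI hfk using hex
  obtain ⟨t, σ, hσ, ht⟩ := hc fun n => Φ (f n)
  have ht0 : t ≠ 0 := by
    rintro rfl
    obtain ⟨N, hN⟩ := ht k
    have := hN N le_rfl
    rw [sub_zero] at this
    exact hfk _ (hpow (hΦ _ _ this))
  obtain ⟨g, r, hr, hg⟩ := hess t ht0
  have hmem : r ∈ ⨅ n, I n := by
    rw [Submodule.mem_iInf]
    intro n
    -- `r` is the limit of the elements `a * f (σ M)` of `I n`, where `a` approximates `g`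
    refine mem_of_forall_sub_mem_pow _ _ fun l => ?_
    obtain ⟨N, hN⟩ := ht l
    obtain ⟨a, ha⟩ := hd l g
    let M := max N n
    refine ⟨a * f (σ M), Ideal.mul_mem_left _ _
      (hanti ((le_max_right N n).trans (hσ.id_le M)) (hfI _)), hpow (hΦ _ _ ?_)⟩
    have h : Φ (a * f (σ M) - r) = (Φ a - g) * Φ (f (σ M)) + g * (Φ (f (σ M)) - t) := by
      rw [map_sub, ← hg, map_mul]; ring
    rw [h]
    exact dvd_add (Dvd.dvd.mul_right ha _) (Dvd.dvd.mul_left (hN M (le_max_left N n)) _)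
  rw [hbot, Ideal.mem_bot] at hmem
  exact hr hmem

/-! ### The ring `A[ε][ε]` for `A` dense in `ℤ_p` -/

section Padic

variable {p : ℕ} [hp : Fact p.Prime]

/-- The element `p^m XY` of `A[X, Y]/(X², Y²)`, encoded as `A[ε][ε]`. -/
def socle (A : Type) [CommRing A] (p m : ℕ) : A[ε][ε] := inr (inr ((p : A) ^ m))

lemma exists_mul_eq_pow {x : ℤ_[p]} (hx : x ≠ 0) : ∃ y, ∃ m : ℕ, y * x = (p : ℤ_[p]) ^ m :=
  ⟨((PadicInt.unitCoeff hx)⁻¹ : ℤ_[p]ˣ), x.valuation, by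
    rw [Units.inv_mul_eq_iff_eq_mul]
    exact PadicInt.unitCoeff_spec hx⟩

/-- Every nonzero ideal of `ℤ_p[ε][ε]` contains some `p^m XY`: multiply by `XY`, `Y`, `X` or `1`
according to the first nonzero coordinate, then by a unit. -/
lemma exists_mul_eq_pow_eps_eps {t : ℤ_[p][ε][ε]} (ht : t ≠ 0) :
    ∃ g, ∃ m : ℕ, g * t = socle ℤ_[p] p m := by
  by_cases h1 : t.fst.fst = 0
  · by_cases h2 : t.fst.snd = 0
    · by_cases h3 : t.snd.fst = 0
      · have h4 : t.snd.snd ≠ 0 := fun h4 => ht (by ext <;> simp [*])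
        obtain ⟨y, m, h⟩ := exists_mul_eq_pow h4
        refine ⟨inl (inl y), m, ?_⟩
        ext <;> simp [socle, *]
      · obtain ⟨y, m, h⟩ := exists_mul_eq_pow h3
        refine ⟨inl (inr y), m, ?_⟩
        ext <;> simp [socle, *]
    · obtain ⟨y, m, h⟩ := exists_mul_eq_pow h2
      refine ⟨inr (inl y), m, ?_⟩
      ext <;> simp [socle, *]
  · obtain ⟨y, m, h⟩ := exists_mul_eq_pow h1
    refine ⟨inr (inr y), m, ?_⟩
    ext <;> simp [socle, *]

lemma pow_dvd_iff_norm (x : ℤ_[p]) (n : ℕ) :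
    (p : ℤ_[p]) ^ n ∣ x ↔ ‖x‖ ≤ (p : ℝ) ^ (-n : ℤ) := by
  rw [PadicInt.norm_le_pow_iff_mem_span_pow, Ideal.mem_span_singleton]

lemma zpow_neg_pos (n : ℕ) : 0 < (p : ℝ) ^ (-n : ℤ) :=
  zpow_pos (by exact_mod_cast hp.out.pos) _

lemma seqCompactAdic_padicInt : SeqCompactAdic p ℤ_[p] := by
  intro s
  obtain ⟨t, -, σ, hσ, ht⟩ :=
    (isCompact_univ (X := ℤ_[p])).isSeqCompact (x := s) (fun _ => trivial)
  refine ⟨t, σ, hσ, fun l => ?_⟩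
  obtain ⟨N, hN⟩ := Metric.tendsto_atTop.1 ht _ (zpow_neg_pos (p := p) l)
  refine ⟨N, fun n hn => ?_⟩
  rw [pow_dvd_iff_norm, ← dist_eq_norm]
  exact (hN n hn).le

lemma denseImage_padicInt {A : Type} [CommRing A] (φ : A →+* ℤ_[p]) : DenseImage p φ := by
  intro k z
  obtain ⟨n, hn⟩ :=
    (PadicInt.denseRange_intCast (p := p)).exists_dist_lt z (zpow_neg_pos (p := p) k)
  refine ⟨n, ?_⟩
  rw [pow_dvd_iff_norm, map_intCast, ← dist_eq_norm, dist_comm]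
  exact hn.le

lemma eq_zero_of_forall_pow_dvd (x : ℤ_[p]) (h : ∀ n, (p : ℤ_[p]) ^ n ∣ x) : x = 0 := by
  by_contra hx
  have := (PadicInt.mem_span_pow_iff_le_valuation x hx (x.valuation + 1)).1
    (Ideal.mem_span_singleton.2 (h _))
  omega

variable {A : Type} [CommRing A] [IsLocalRing A]

lemma dmap_socle {A : Type} [CommRing A] (φ : A →+* ℤ_[p]) (m : ℕ) :
    dmap (dmap φ) (socle A p m) = socle ℤ_[p] p m := by
  ext <;> simp only [socle, fst_dmap, snd_dmap, fst_inr, snd_inr, map_zero, map_pow, map_natCast]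

lemma isWeaklyQuasiComplete [IsNoetherianRing A] (φ : A →+* ℤ_[p]) (hφ : ReflectsDvd p φ)
    (hpm : (p : A) ∈ IsLocalRing.maximalIdeal A) : IsWeaklyQuasiComplete A[ε][ε] := by
  refine isWeaklyQuasiComplete_of_essential (p := p) (dmap (dmap φ)) hφ.dmap.dmap
    (denseImage_padicInt φ).dmap.dmap seqCompactAdic_padicInt.dualNumber.dualNumber ?_ ?_
  · rw [mem_maximalIdeal_iff, mem_maximalIdeal_iff]
    simpa using hpm
  · intro t ht
    obtain ⟨g, m, hg⟩ := exists_mul_eq_pow_eps_eps ht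
    refine ⟨g, socle A p m, fun h0 => ?_, hg.trans (dmap_socle φ m).symm⟩
    have h1 : (p : A) ^ m = 0 := congrArg (fun z : A[ε][ε] => z.snd.snd) h0
    have h2 := congrArg φ h1
    rw [map_pow, map_natCast, map_zero] at h2
    exact pow_ne_zero m (by exact_mod_cast hp.out.ne_zero) h2

/-- The ideal of all `x X + y Y + w XY` with `y ≡ b x mod p ^ n`. -/
def slopeIdeal (φ : A →+* ℤ_[p]) (b : ℤ_[p]) (n : ℕ) : Ideal A[ε][ε] where
  carrier := {r | r.fst.fst = 0 ∧ (p : ℤ_[p]) ^ n ∣ φ r.snd.fst - b * φ r.fst.snd}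
  zero_mem' := by simp
  add_mem' := by
    rintro x y ⟨hx, hx'⟩ ⟨hy, hy'⟩
    refine ⟨by simp [hx, hy], ?_⟩
    convert dvd_add hx' hy' using 1
    simp; ring
  smul_mem' := by
    rintro c x ⟨hx, hx'⟩
    refine ⟨by simp [hx], ?_⟩
    convert Dvd.dvd.mul_left hx' (φ c.fst.fst) using 1
    simp [hx]; ring

lemma not_isQuasiComplete (φ : A →+* ℤ_[p]) (b : ℤ_[p])
    (hb : ∀ x y : A, φ y = b * φ x → x = 0) : ¬ IsQuasiComplete A[ε][ε] := by
  intro H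
  obtain ⟨s, hs⟩ := H (slopeIdeal φ b)
    (fun n r hr => ⟨hr.1, (pow_dvd_pow _ n.le_succ).trans hr.2⟩) 2
  obtain ⟨a, ha⟩ := denseImage_padicInt φ s b
  let r : A[ε][ε] := inl (inr 1) + inr (inl a)
  have hr : r ∈ slopeIdeal φ b s := ⟨by simp [r], by simpa [r] using ha⟩
  obtain ⟨u, hu, v, hv, huv⟩ := Submodule.mem_sup.1 (hs hr)
  have hu' : u.fst.snd = 0 := by
    refine hb _ u.snd.fst (sub_eq_zero.1 (eq_zero_of_forall_pow_dvd _ fun n => ?_))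
    exact ((Submodule.mem_iInf _).1 hu n).2
  have hv' : v.fst.snd ∈ IsLocalRing.maximalIdeal A := by
    rw [pow_two] at hv
    refine Submodule.mul_induction_on hv (fun x hx y hy => ?_) (fun x y hx hy => ?_)
    · rw [mem_maximalIdeal_iff, mem_maximalIdeal_iff] at hx hy
      rw [TrivSqZeroExt.fst_mul, DualNumber.snd_mul]
      exact add_mem (Ideal.mul_mem_right _ _ hx) (Ideal.mul_mem_left _ _ hy)
    · simpa using add_mem hx hy
  have h1 : v.fst.snd = 1 := by
    have := congrArg (fun z : A[ε][ε] => z.fst.snd) huv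
    simpa [r, hu'] using this
  rw [h1] at hv'
  exact (Ideal.ne_top_iff_one _).1 (Ideal.IsPrime.ne_top inferInstance) hv'

end Padic

/-! ### The localization `ℤ_(5)` and an irrational `5`-adic integer -/

section Concrete

instance : Fact (Nat.Prime 5) := ⟨by norm_num⟩

instance : (Ideal.span {(5 : ℤ)}).IsPrime :=
  (Ideal.span_singleton_prime (by norm_num)).2 (by norm_num)

/-- `ℤ` localized at the prime `5`. -/
abbrev Zloc : Type := Localization.AtPrime (Ideal.span {(5 : ℤ)})

lemma isUnit_intCast (s : (Ideal.span {(5 : ℤ)}).primeCompl) :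
    IsUnit (Int.castRingHom ℤ_[5] s) := by
  have hs : ¬ (5 : ℤ) ∣ s := fun h => s.2 (Ideal.mem_span_singleton.2 h)
  rw [PadicInt.isUnit_iff]
  refine le_antisymm (PadicInt.norm_le_one _) (not_lt.1 fun h => hs ?_)
  exact_mod_cast (PadicInt.norm_int_lt_one_iff_dvd (p := 5) (s : ℤ)).1 (by simpa using h)

/-- The inclusion of `ℤ_(5)` into its completion. -/
noncomputable def toPadic : Zloc →+* ℤ_[5] :=
  IsLocalization.lift (M := (Ideal.span {(5 : ℤ)}).primeCompl) isUnit_intCast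

lemma toPadic_mul_eq (a : Zloc) : ∃ n : ℤ, ∃ s : (Ideal.span {(5 : ℤ)}).primeCompl,
    a * algebraMap ℤ Zloc s = algebraMap ℤ Zloc n ∧ toPadic a * ((s : ℤ) : ℤ_[5]) = n := by
  obtain ⟨⟨n, s⟩, h⟩ := IsLocalization.surj (Ideal.span {(5 : ℤ)}).primeCompl a
  refine ⟨n, s, h, ?_⟩
  have := congrArg toPadic h
  simpa using this

lemma reflectsDvd_toPadic : ReflectsDvd 5 toPadic := by
  intro k a h
  obtain ⟨n, s, h1, h2⟩ := toPadic_mul_eq a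
  have h3 : ((5 : ℕ) : ℤ_[5]) ^ k ∣ (n : ℤ_[5]) := h2 ▸ Dvd.dvd.mul_right h _
  rw [PadicInt.pow_p_dvd_int_iff] at h3
  have h4 := map_dvd (algebraMap ℤ Zloc) h3
  rw [← h1] at h4
  have hu : IsUnit (algebraMap ℤ Zloc s) := IsLocalization.map_units Zloc s
  simpa using hu.dvd_mul_right.1 h4

lemma five_mem : ((5 : ℕ) : Zloc) ∈ IsLocalRing.maximalIdeal Zloc := by
  have := (IsLocalization.AtPrime.to_map_mem_maximal_iff Zloc (Ideal.span {(5 : ℤ)}) 5).2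
    (Ideal.mem_span_singleton_self 5)
  simpa using this

lemma exists_sq_eq_neg_one : ∃ b : ℤ_[5], b ^ 2 = -1 := by
  -- Hensel's lemma at the root `2` of `X² + 1` modulo `5`
  have h4 : ‖(4 : ℤ_[5])‖ = 1 := by
    refine le_antisymm (PadicInt.norm_le_one _) (not_lt.1 fun h => ?_)
    have := (PadicInt.norm_int_lt_one_iff_dvd (p := 5) 4).1 (by simpa using h)
    norm_num at this
  have h5 : ‖(5 : ℤ_[5])‖ < 1 := by
    exact_mod_cast (PadicInt.norm_int_lt_one_iff_dvd (p := 5) 5).2 (by norm_num)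
  obtain ⟨b, hb, -⟩ := hensels_lemma (p := 5)
    (F := (Polynomial.X ^ 2 + 1 : Polynomial ℤ_[5])) (a := 2) (by
      simp only [map_add, map_pow, Polynomial.aeval_X, map_one,
        Polynomial.derivative_X_pow, Polynomial.derivative_one]
      norm_num [h4, h5])
  exact ⟨b, by simpa [add_eq_zero_iff_eq_neg] using hb⟩

/-- A square root of `-1` is not a ratio of elements of `ℤ_(5)`, since `-1` is not a square
in `ℚ`. -/
lemma eq_zero_of_toPadic_eq {b : ℤ_[5]} (hb : b ^ 2 = -1) (x y : Zloc)
    (h : toPadic y = b * toPadic x) : x = 0 := by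
  obtain ⟨n, s, h1, h2⟩ := toPadic_mul_eq x
  obtain ⟨m, u, h3, h4⟩ := toPadic_mul_eq y
  have h5 : (((m * s) ^ 2 + (n * u) ^ 2 : ℤ) : ℤ_[5]) = 0 := by
    push_cast
    rw [← h2, ← h4, h]
    linear_combination (toPadic x * (u : ℤ) * (s : ℤ)) ^ 2 * hb
  have h6 : (m * s) ^ 2 + (n * u) ^ 2 = (0 : ℤ) := by exact_mod_cast h5
  have h7 : n * (u : ℤ) = 0 := by nlinarith [sq_nonneg (m * (s : ℤ)), sq_nonneg (n * (u : ℤ))]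
  have hu : (u : ℤ) ≠ 0 := fun h0 => u.2 (by rw [h0]; exact zero_mem _)
  have hn : n = 0 := (mul_eq_zero.1 h7).resolve_right hu
  rw [hn, map_zero] at h1
  exact (IsLocalization.map_units Zloc s).mul_left_eq_zero.1 h1

end Concrete

end QuasiCompleteExample

open QuasiCompleteExample

/-- **Anderson's conjecture.** There exists a commutative Noetherian local ring that
is weakly quasi-complete but not quasi-complete. -/
theorem exists_weaklyQuasiComplete_not_quasiComplete :
    ∃ (R : Type) (_ : CommRing R) (_ : IsNoetherianRing R) (_ : IsLocalRing R),
      IsWeaklyQuasiComplete R ∧ ¬ IsQuasiComplete R := by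
  have : IsNoetherianRing Zloc :=
    IsLocalization.isNoetherianRing (Ideal.span {(5 : ℤ)}).primeCompl _ inferInstance
  obtain ⟨b, hb⟩ := exists_sq_eq_neg_one
  exact ⟨Zloc[ε][ε], inferInstance, inferInstance, inferInstance,
    isWeaklyQuasiComplete toPadic reflectsDvd_toPadic five_mem,
    not_isQuasiComplete toPadic b (eq_zero_of_toPadic_eq hb)⟩
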